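/- arXiv:2005.05047 — 6 statements merged into one kernel-verified Lean document; each statement's English description precedes it below -/
import Mathlib

section
/- Let M and N be tagged edges of P_{np}. Then there is an elementary move M ↦ N if and only if there is an elementary move τN ↦ M. -/
/-- A candidate tagged edge of the punctured polygon with `N` boundary vertices:
a start `a`, an end `b` (vertices modelled by `ZMod N`) and a tag `ε`. -/
structure TaggedEdge (N : ℕ) where
  a : ZMod N
  b : ZMod N
  ε : ℤ

/-- `|δ_{a,b}|`, the number of vertices on the counterclockwise boundary path
from `a` to `b` (equal to `((b - a) mod N) + 1` if `a ≠ b`, and `N + 1` if `a = b`). -/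
def deltaLen {N : ℕ} (a b : ZMod N) : ℕ :=
  if a = b then N + 1 else (b - a).val + 1

/-- The set `𝔈` of tagged edges of `P_N` (with parameter `n`): triples `M_{a,b}^ε`
with `|δ_{a,b}| ≥ N − n + 3`, `ε ∈ {1, −1}` and `ε = 1` whenever `a ≠ b`. -/
def Edges (n N : ℕ) : Set (TaggedEdge N) :=
  {M | N - n + 3 ≤ deltaLen M.a M.b ∧ (M.ε = 1 ∨ M.ε = -1) ∧ (M.a ≠ M.b → M.ε = 1)}

/-- The translation `τ` on tagged edges: `τ M_{a,b} = M_{a−1,b−1}` for `a ≠ b`,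
and `τ M_{a,a}^ε = M_{a−1,a−1}^{−ε}`. -/
def tr {N : ℕ} (M : TaggedEdge N) : TaggedEdge N :=
  if M.a = M.b then ⟨M.a - 1, M.b - 1, -M.ε⟩ else ⟨M.a - 1, M.b - 1, M.ε⟩

/-- Elementary moves between tagged edges of `P_N` (with parameter `n`). -/
def ElemMove (n N : ℕ) (M M' : TaggedEdge N) : Prop :=
  (deltaLen M.a M.b = N - n + 3 ∧ M' = ⟨M.a, M.b + 1, 1⟩) ∨
  (N - n + 4 ≤ deltaLen M.a M.b ∧ deltaLen M.a M.b ≤ N - 1 ∧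
    (M' = ⟨M.a + 1, M.b, 1⟩ ∨ M' = ⟨M.a, M.b + 1, 1⟩)) ∨
  (deltaLen M.a M.b = N ∧
    (M' = ⟨M.a + 1, M.b, 1⟩ ∨ M' = ⟨M.a, M.a, 1⟩ ∨ M' = ⟨M.a, M.a, -1⟩)) ∨
  (M.a = M.b ∧ M' = ⟨M.a + 1, M.a, 1⟩)

/-!
Forgetting tags, every elementary move shifts exactly one of the two endpoints one step
counterclockwise: if `|δ_{a,b}| = N` then `a = b + 1`, so `M_{a,b} ↦ M_{a,a}^{±1}` also moves `b` to
`b + 1`. Conversely, between tagged edges every such shift is an elementary move, the boundary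
segments `M_{a,a+1}` being too short to occur. Since `τ` moves both endpoints one step back,
shifting one endpoint of `M` yields `N` exactly when shifting the other endpoint of `τN` yields `M`.
-/

section deltaLen

variable {N : ℕ} {a b : ZMod N}

theorem deltaLen_self (a : ZMod N) : deltaLen a a = N + 1 := if_pos rfl

theorem deltaLen_of_ne (hab : a ≠ b) : deltaLen a b = (b - a).val + 1 := if_neg hab

theorem deltaLen_add_right (a b c : ZMod N) : deltaLen (a + c) (b + c) = deltaLen a b := by
  simp only [deltaLen, add_left_inj, add_sub_add_right_eq_sub]

theorem deltaLen_sub_right (a b c : ZMod N) : deltaLen (a - c) (b - c) = deltaLen a b := by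
  simp only [sub_eq_add_neg, deltaLen_add_right]

theorem deltaLen_self_add_one (a : ZMod N) : deltaLen a (a + 1) = 2 := by
  by_cases hN : N = 1
  · subst hN
    rw [Subsingleton.elim (a + 1) a, deltaLen_self]
  · have : Nontrivial (ZMod N) := ZMod.nontrivial_iff.2 hN
    rw [deltaLen_of_ne (left_ne_add.2 one_ne_zero), add_sub_cancel_left, ZMod.val_one'' hN]

variable [NeZero N]

theorem deltaLen_le_of_ne (hab : a ≠ b) : deltaLen a b ≤ N := by
  rw [deltaLen_of_ne hab]
  exact ZMod.val_lt (b - a)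

theorem deltaLen_add_one_right (hab : a ≠ b) : deltaLen a (b + 1) = deltaLen a b + 1 := by
  have val_sub_add_one : (b + 1 - a).val = ((b - a).val + 1) % N := by
    rw [add_sub_right_comm, ZMod.val_add, ZMod.val_one_eq_one_mod, Nat.add_mod_mod]
  rw [deltaLen_of_ne hab]
  obtain hlt | heq : (b - a).val + 1 < N ∨ (b - a).val + 1 = N :=
    Nat.lt_or_eq_of_le (ZMod.val_lt (b - a))
  · rw [Nat.mod_eq_of_lt hlt] at val_sub_add_one
    have hne : a ≠ b + 1 := by
      rintro rfl
      simp at val_sub_add_one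
    rw [deltaLen_of_ne hne, val_sub_add_one]
  · rw [heq, Nat.mod_self, ZMod.val_eq_zero, sub_eq_zero] at val_sub_add_one
    rw [val_sub_add_one, deltaLen_self, heq]

theorem deltaLen_add_one_left (hab : a + 1 ≠ b) : deltaLen (a + 1) b + 1 = deltaLen a b := by
  rw [← deltaLen_add_one_right hab, deltaLen_add_right]

theorem deltaLen_eq_iff_eq_add_one (hab : a ≠ b) : deltaLen a b = N ↔ a = b + 1 := by
  have hsucc := deltaLen_add_one_right hab
  constructor
  · intro h
    by_contra hne
    have hle := deltaLen_le_of_ne hne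
    omega
  · intro h
    rw [← h, deltaLen_self] at hsucc
    omega

end deltaLen

namespace TaggedEdge

variable {n N : ℕ} {M M' : TaggedEdge N}

@[simp]
theorem tr_a (M : TaggedEdge N) : (tr M).a = M.a - 1 := by
  unfold tr
  split_ifs <;> rfl

@[simp]
theorem tr_b (M : TaggedEdge N) : (tr M).b = M.b - 1 := by
  unfold tr
  split_ifs <;> rfl

theorem tr_mem_edges (hM : M ∈ Edges n N) : tr M ∈ Edges n N := by
  obtain ⟨hlen, htag, hplain⟩ := hM
  refine ⟨by rwa [tr_a, tr_b, deltaLen_sub_right], ?_⟩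
  by_cases hab : M.a = M.b
  · have hneg : -M.ε = 1 ∨ -M.ε = -1 := by omega
    simpa [tr, hab] using hneg
  · simp [tr, hab, hplain hab]

theorem b_ne_a_add_one_of_mem_edges (hM : M ∈ Edges n N) : M.b ≠ M.a + 1 := by
  intro h
  have hlen := hM.1
  rw [h, deltaLen_self_add_one] at hlen
  omega

/-- `M'` is obtained from `M` by moving one of the two endpoints one step counterclockwise:
the endpoint form of an elementary move, in which tags and lengths are disregarded. -/
def IsPivot (M M' : TaggedEdge N) : Prop :=
  (M'.a = M.a + 1 ∧ M'.b = M.b) ∨ (M'.a = M.a ∧ M'.b = M.b + 1)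

theorem isPivot_tr_iff : (tr M').IsPivot M ↔ M.IsPivot M' := by
  simp only [IsPivot, tr_a, tr_b, sub_add_cancel, eq_sub_iff_add_eq]
  rw [or_comm, eq_comm (a := M.a), eq_comm (a := M.b), eq_comm (b := M'.a), eq_comm (b := M'.b)]

variable [NeZero N]

theorem isPivot_of_elemMove (h : ElemMove n N M M') : M.IsPivot M' := by
  obtain ⟨-, rfl⟩ | ⟨-, -, rfl | rfl⟩ | ⟨hlen, hM'⟩ | ⟨hab, rfl⟩ := h
  · exact .inr ⟨rfl, rfl⟩
  · exact .inl ⟨rfl, rfl⟩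
  · exact .inr ⟨rfl, rfl⟩
  · have hab : M.a ≠ M.b := by
      intro hab
      rw [hab, deltaLen_self] at hlen
      omega
    have hsucc : M.a = M.b + 1 := (deltaLen_eq_iff_eq_add_one hab).1 hlen
    obtain rfl | rfl | rfl := hM'
    · exact .inl ⟨rfl, rfl⟩
    · exact .inr ⟨rfl, hsucc⟩
    · exact .inr ⟨rfl, hsucc⟩
  · exact .inl ⟨rfl, hab⟩

theorem elemMove_of_a_eq_add_one (hM : M ∈ Edges n N) (hM' : M' ∈ Edges n N)
    (ha : M'.a = M.a + 1) (hb : M'.b = M.b) : ElemMove n N M M' := by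
  have hne : M.a + 1 ≠ M.b := (b_ne_a_add_one_of_mem_edges hM).symm
  have hM'_eq : M' = ⟨M.a + 1, M.b, 1⟩ := by
    rw [← ha, ← hb, ← hM'.2.2 (by rwa [ha, hb])]
  have hlen : N - n + 4 ≤ deltaLen M.a M.b := by
    have hlen' := hM'.1
    rw [ha, hb] at hlen'
    rw [← deltaLen_add_one_left hne]
    omega
  by_cases hab : M.a = M.b
  · exact .inr <| .inr <| .inr ⟨hab, hab ▸ hM'_eq⟩
  obtain hlt | heq := (deltaLen_le_of_ne hab).lt_or_eq
  · exact .inr <| .inl ⟨hlen, Nat.le_sub_one_of_lt hlt, .inl hM'_eq⟩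
  · exact .inr <| .inr <| .inl ⟨heq, .inl hM'_eq⟩

theorem elemMove_of_b_eq_add_one (hM : M ∈ Edges n N) (hM' : M' ∈ Edges n N)
    (ha : M'.a = M.a) (hb : M'.b = M.b + 1) : ElemMove n N M M' := by
  have hab : M.a ≠ M.b := by
    intro hab
    exact b_ne_a_add_one_of_mem_edges hM' (by rw [ha, hb, hab])
  obtain hlt | heq := (deltaLen_le_of_ne hab).lt_or_eq
  · have hne : M.a ≠ M.b + 1 := mt (deltaLen_eq_iff_eq_add_one hab).2 hlt.ne
    have hM'_eq : M' = ⟨M.a, M.b + 1, 1⟩ := by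
      rw [← ha, ← hb, ← hM'.2.2 (by rwa [ha, hb])]
    obtain hmin | hmin := hM.1.eq_or_lt
    · exact .inl ⟨hmin.symm, hM'_eq⟩
    · exact .inr <| .inl ⟨hmin, Nat.le_sub_one_of_lt hlt, .inr hM'_eq⟩
  · have hsucc : M.a = M.b + 1 := (deltaLen_eq_iff_eq_add_one hab).1 heq
    have hM'_eq : M' = ⟨M.a, M.a, M'.ε⟩ :=
      congrArg₂ (mk · · M'.ε) ha (hb.trans hsucc.symm)
    obtain hε | hε := hM'.2.1
    · exact .inr <| .inr <| .inl ⟨heq, .inr <| .inl (hε ▸ hM'_eq)⟩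
    · exact .inr <| .inr <| .inl ⟨heq, .inr <| .inr (hε ▸ hM'_eq)⟩

theorem elemMove_iff_isPivot (hM : M ∈ Edges n N) (hM' : M' ∈ Edges n N) :
    ElemMove n N M M' ↔ M.IsPivot M' :=
  ⟨isPivot_of_elemMove, fun h ↦ h.elim
    (fun ⟨ha, hb⟩ ↦ elemMove_of_a_eq_add_one hM hM' ha hb)
    (fun ⟨ha, hb⟩ ↦ elemMove_of_b_eq_add_one hM hM' ha hb)⟩

end TaggedEdge

open TaggedEdge in
theorem elemMove_iff_elemMove_tr_general {n N : ℕ} (hn : 0 < n) (hnN : n ≤ N)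
    {M M' : TaggedEdge N} (hM : M ∈ Edges n N) (hM' : M' ∈ Edges n N) :
    ElemMove n N M M' ↔ ElemMove n N (tr M') M := by
  have : NeZero N := .of_pos (hn.trans_le hnN)
  rw [elemMove_iff_isPivot hM hM', elemMove_iff_isPivot (tr_mem_edges hM') hM, isPivot_tr_iff]

/-- For tagged edges `M`, `N` of `P_{np}`, there is an elementary move `M ↦ N`
if and only if there is an elementary move `τN ↦ M`. -/
theorem elemMove_iff_elemMove_tr (n p : ℕ) (hn : 3 ≤ n) (hp : 1 ≤ p) :
    ∀ M ∈ Edges n (n * p), ∀ N ∈ Edges n (n * p),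
      (ElemMove n (n * p) M N ↔ ElemMove n (n * p) (tr N) M) :=
  fun _ hM _ hN ↦
    elemMove_iff_elemMove_tr_general (by omega) (Nat.le_mul_of_pos_right n hp) hM hN
end

section
/- The pair (Γ_{n,p}, τ_{n,p}) is a stable translation quiver: τ_{n,p} is a bijection of the vertex set of Γ_{n,p}, and for all vertices x, y the number of arrows x → y in Γ_{n,p} equals the number of arrows τ_{n,p}(y) → x. -/
/-- Vertices of the translation quiver `Γ` with columns indexed by `ZMod N` and
levels `{0, 0̄, 1, …, m−2}`: the level `0` is `Sum.inl false`, the level `0̄` is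
`Sum.inl true`, and the level `j ∈ {1, …, m−2}` is `Sum.inr k` with `k = j − 1`. -/
abbrev GammaV (N m : ℕ) := ZMod N × (Bool ⊕ Fin (m - 2))

/-- The arrows of the quiver `Γ`: `(i,1)→(i,0)`, `(i,1)→(i,0̄)`, `(i,j)→(i,j−1)` for
`2 ≤ j ≤ m−2`, `(i,0)→(i+1,1)`, `(i,0̄)→(i+1,1)`, `(i,j−1)→(i+1,j)` for `2 ≤ j ≤ m−2`. -/
def GammaArrow (N m : ℕ) : GammaV N m → GammaV N m → Prop
  | (i, .inr j), (i', .inl _) => i' = i ∧ (j : ℕ) = 0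
  | (i, .inr j), (i', .inr j') =>
      (i' = i ∧ (j' : ℕ) + 1 = (j : ℕ)) ∨ (i' = i + 1 ∧ (j : ℕ) + 1 = (j' : ℕ))
  | (i, .inl _), (i', .inr j') => i' = i + 1 ∧ (j' : ℕ) = 0
  | (_, .inl _), (_, .inl _) => False

/-- The translation `τ(i,j) = (i−1,j)`, with the `0`/`0̄` switch at `i = 0` when `N` is odd. -/
def GammaTau (N m : ℕ) : GammaV N m → GammaV N m
  | (i, .inl e) => if Odd N ∧ i = 0 then (i - 1, .inl (!e)) else (i - 1, .inl e)
  | (i, .inr j) => (i - 1, .inr j)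

/-!
`Γ` is the repetition of an orientation of the diagram `D_n`, with columns in `ℤ/N`, and its
translation moves back one column, followed in column `0` by the exchange of the levels `0` and
`0̄` when `N` is odd. These two levels have the same predecessors and the same successors in `D_n`,
so the exchange is invisible to arrows: stability reduces to that of the untwisted repetition,
where each arrow `(i, a) → (i, b)` is matched with `(i - 1, b) → (i, a)` and each arrow
`(i, b) → (i + 1, a)` with `(i, a) → (i, b)`.
-/

section Repetition

variable {ι κ : Type*}

/-- Adjacency in the repetition of the quiver `R` on `κ`, with columns `ι` and column shift `s`:
an arrow `a → b` of `R` yields arrows `(i, a) → (i, b)` and `(i, b) → (s i, a)`. -/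
def RepetitionArrow (s : Equiv.Perm ι) (R : κ → κ → Prop) (x y : ι × κ) : Prop :=
  (y.1 = x.1 ∧ R x.2 y.2) ∨ (y.1 = s x.1 ∧ R y.2 x.2)

/-- The translation of a repetition quiver, twisted by a permutation of the levels depending on the
column: `(i, a) ↦ (s⁻¹ i, σ i a)`. -/
def twistedTranslation (s : Equiv.Perm ι) (σ : ι → Equiv.Perm κ) : Equiv.Perm (ι × κ) :=
  s.symm.prodShear σ

theorem repetitionArrow_iff_repetitionArrow_twistedTranslation {s : Equiv.Perm ι}
    {R : κ → κ → Prop} {σ : ι → Equiv.Perm κ} (hpred : ∀ i a b, R a (σ i b) ↔ R a b)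
    (hsucc : ∀ i a b, R (σ i a) b ↔ R a b) (x y : ι × κ) :
    RepetitionArrow s R x y ↔ RepetitionArrow s R (twistedTranslation s σ y) x := by
  obtain ⟨i, a⟩ := x
  obtain ⟨j, b⟩ := y
  calc RepetitionArrow s R (i, a) (j, b)
      ↔ (j = i ∧ R a b) ∨ (j = s i ∧ R b a) := Iff.rfl
    _ ↔ (i = s.symm j ∧ R b a) ∨ (i = j ∧ R a b) := by
      rw [or_comm, Equiv.eq_symm_apply, eq_comm (a := j), eq_comm (a := j)]
    _ ↔ (i = s.symm j ∧ R (σ j b) a) ∨ (i = s (s.symm j) ∧ R a (σ j b)) := by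
      rw [hpred, hsucc, s.apply_symm_apply]
    _ ↔ RepetitionArrow s R (twistedTranslation s σ (j, b)) (i, a) := Iff.rfl

end Repetition

section DynkinD

/-- Adjacency in the Dynkin diagram `D_{k+2}` oriented towards its fork: `k - 1 → ⋯ → 1 → 0` on the
chain `Fin k`, whose end `0` has an arrow to each of the two fork vertices, indexed by `Bool`. -/
def DynkinDArrow {k : ℕ} : Bool ⊕ Fin k → Bool ⊕ Fin k → Prop
  | .inr j, .inl _ => (j : ℕ) = 0
  | .inr j, .inr j' => (j' : ℕ) + 1 = j
  | .inl _, _ => False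

/-- The automorphism of `D_{k+2}` exchanging the two fork vertices. -/
def forkSwap (k : ℕ) : Equiv.Perm (Bool ⊕ Fin k) :=
  Equiv.sumCongr Equiv.boolNot (Equiv.refl (Fin k))

variable {k : ℕ}

theorem dynkinDArrow_forkSwap_right (a b : Bool ⊕ Fin k) :
    DynkinDArrow a (forkSwap k b) ↔ DynkinDArrow a b := by
  rcases a with _ | _ <;> rcases b with _ | _ <;> rfl

theorem dynkinDArrow_forkSwap_left (a b : Bool ⊕ Fin k) :
    DynkinDArrow (forkSwap k a) b ↔ DynkinDArrow a b := by
  rcases a with _ | _ <;> rcases b with _ | _ <;> rfl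

end DynkinD

section Gamma

variable (N m : ℕ)

theorem gammaArrow_iff_repetitionArrow (x y : GammaV N m) :
    GammaArrow N m x y ↔ RepetitionArrow (Equiv.addRight 1) DynkinDArrow x y := by
  rcases x with ⟨i, e | j⟩ <;> rcases y with ⟨i', e' | j'⟩ <;>
    simp [GammaArrow, RepetitionArrow, DynkinDArrow]

/-- The twist of the levels in the translation of `Γ`: the exchange of `0` and `0̄` in column `0`
when `N` is odd, and the identity otherwise. -/
def gammaTwist (k : ℕ) (i : ZMod N) : Equiv.Perm (Bool ⊕ Fin k) :=
  if Odd N ∧ i = 0 then forkSwap k else 1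

theorem dynkinDArrow_gammaTwist_right {k : ℕ} (i : ZMod N) (a b : Bool ⊕ Fin k) :
    DynkinDArrow a (gammaTwist N k i b) ↔ DynkinDArrow a b := by
  unfold gammaTwist
  split_ifs
  · exact dynkinDArrow_forkSwap_right a b
  · rfl

theorem dynkinDArrow_gammaTwist_left {k : ℕ} (i : ZMod N) (a b : Bool ⊕ Fin k) :
    DynkinDArrow (gammaTwist N k i a) b ↔ DynkinDArrow a b := by
  unfold gammaTwist
  split_ifs
  · exact dynkinDArrow_forkSwap_left a b
  · rfl

theorem gammaTau_eq_twistedTranslation :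
    GammaTau N m = twistedTranslation (Equiv.addRight 1) (gammaTwist N (m - 2)) := by
  funext ⟨i, a⟩
  by_cases h : Odd N ∧ i = 0 <;> rcases a with e | j <;>
    simp [GammaTau, twistedTranslation, gammaTwist, forkSwap, h, sub_eq_add_neg]

theorem gammaTau_bijective : Function.Bijective (GammaTau N m) := by
  rw [gammaTau_eq_twistedTranslation]
  exact Equiv.bijective _

theorem gammaArrow_iff_gammaArrow_gammaTau (x y : GammaV N m) :
    GammaArrow N m x y ↔ GammaArrow N m (GammaTau N m y) x := by
  rw [gammaArrow_iff_repetitionArrow, gammaArrow_iff_repetitionArrow,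
    gammaTau_eq_twistedTranslation]
  exact repetitionArrow_iff_repetitionArrow_twistedTranslation
    (dynkinDArrow_gammaTwist_right N) (dynkinDArrow_gammaTwist_left N) x y

end Gamma

/-- `N = 0` is the infinite quiver `ℤD_{k+2}`. Writing the number of levels as `k + 2` keeps the
truncated subtraction in `GammaV` harmless. -/
theorem gamma_np_stable_translation_quiver_general (N k : ℕ) :
    Function.Bijective (GammaTau N (k + 2)) ∧
      ∀ x y : GammaV N (k + 2),
        (GammaArrow N (k + 2) x y ↔ GammaArrow N (k + 2) (GammaTau N (k + 2) y) x) :=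
  ⟨gammaTau_bijective N (k + 2), gammaArrow_iff_gammaArrow_gammaTau N (k + 2)⟩

/-- `(Γ_{n,p}, τ_{n,p})` is a stable translation quiver: `τ_{n,p}` is a bijection of the
vertex set, and the number of arrows `x → y` (here `0` or `1`) equals the number of
arrows `τ_{n,p}(y) → x`. -/
theorem gamma_np_stable_translation_quiver (n p : ℕ) (hn : 3 ≤ n) (hp : 1 ≤ p) :
    Function.Bijective (GammaTau (n * p) n) ∧
      ∀ x y : GammaV (n * p) n,
        (GammaArrow (n * p) n x y ↔ GammaArrow (n * p) n (GammaTau (n * p) n y) x) := by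
  obtain ⟨k, rfl⟩ := Nat.exists_eq_add_of_le' (Nat.le_of_succ_le hn)
  exact gamma_np_stable_translation_quiver_general _ k
end

section
/- The map φ_p intertwines the translations: for every vertex (i,j) of Γ_{n,p}, φ_p(τ_{n,p}(i,j)) = τ(φ_p(i,j)), where τ_{n,p} is the translation of Γ_{n,p} and τ is the translation on tagged edges of P_{np}. -/
/-- The map `φ_p` from the vertices of `Γ_{n,p}` to tagged edges of `P_{np}`:
`φ_p(i,j) = M_{i+1, i+np+1−j}` for `j ∉ {0,0̄}` (here the level `j = k+1` is coded
by `Sum.inr k`), and `φ_p(i,j) = M_{i+1,i+1}^{±1}` for `j ∈ {0,0̄}`, the tag being `+1`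
exactly when (`j = 0` and `i` is even) or (`j = 0̄` and `i` is odd). -/
def phi (n p : ℕ) : GammaV (n * p) n → TaggedEdge (n * p)
  | (i, .inr k) => ⟨i + 1, i + ((n * p + 1 - ((k : ℕ) + 1) : ℕ) : ZMod (n * p)), 1⟩
  | (i, .inl e) => ⟨i + 1, i + 1, if (e = false ↔ Even i.val) then 1 else -1⟩

/-! On the radii `M_{a,a}^ε` the translation `τ` negates the tag. The tag of `φ_p(i, j)` for
`j ∈ {0, 0̄}` depends on the parity of the representative of `i` in `{0, …, np - 1}`. Subtracting
`1` from `i` switches that parity, except when `i = 0` and `np` is odd, since the representative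
`np - 1` of `-1` is then even as well. The swap of the levels `0` and `0̄` in `τ_{n,p}` makes up
for exactly this exception. -/

section Tags

variable {N : ℕ}

theorem even_zmod_val_sub_one_iff (i : ZMod N) :
    Even (i - 1).val ↔ (Even i.val ↔ Odd N ∧ i = 0) := by
  cases N with
  | zero =>
    have hval (z : ZMod 0) : Even z.val ↔ Even (show ℤ from z) := Int.natAbs_even
    have hodd : ¬(Odd 0 ∧ i = 0) := by simp
    rw [hval, hval, iff_false_right hodd]
    exact Int.even_sub_one
  | succ M =>
    have hval : (i - 1).val = if i = 0 then M else i.val - 1 := Fin.coe_sub_one i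
    by_cases hi : i = 0
    · rw [hval, if_pos hi]
      simp [hi, Nat.odd_add_one]
    · have hpos : 1 ≤ i.val := ZMod.val_pos.mpr hi
      simp [hval, hi, Nat.even_sub hpos]

/-- The tag of the radius `φ_p(i, 0)` (for `e = false`) or `φ_p(i, 0̄)` (for `e = true`). -/
def radiusTag (i : ZMod N) (e : Bool) : ℤ :=
  if (e = false ↔ Even i.val) then 1 else -1

theorem radiusTag_not (i : ZMod N) (e : Bool) : radiusTag i (!e) = -radiusTag i e := by
  by_cases hi : Even i.val <;> cases e <;> simp [radiusTag, hi]

theorem radiusTag_sub_one (i : ZMod N) (e : Bool) :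
    radiusTag (i - 1) e = if Odd N ∧ i = 0 then radiusTag i e else -radiusTag i e := by
  rw [← radiusTag_not]
  simp only [radiusTag, even_zmod_val_sub_one_iff]
  by_cases h : Odd N ∧ i = 0 <;> cases e <;> simp [h]

end Tags

section Translation

variable {N : ℕ}

theorem tr_radius (a : ZMod N) (ε : ℤ) : tr ⟨a, a, ε⟩ = ⟨a - 1, a - 1, -ε⟩ :=
  if_pos rfl

theorem tr_of_ne {a b : ZMod N} (hab : a ≠ b) (ε : ℤ) : tr ⟨a, b, ε⟩ = ⟨a - 1, b - 1, ε⟩ :=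
  if_neg hab

theorem add_one_eq_sub_natCast_iff (i : ZMod N) (k : ℕ) : i + 1 = i - k ↔ N ∣ k + 1 := by
  rw [← ZMod.natCast_eq_zero_iff, eq_sub_iff_add_eq, add_assoc, add_eq_left, Nat.cast_succ,
    add_comm]

end Translation

section Phi

variable {n p : ℕ}

theorem phi_inl (i : ZMod (n * p)) (e : Bool) :
    phi n p (i, .inl e) = ⟨i + 1, i + 1, radiusTag i e⟩ :=
  rfl

theorem phi_inr (i : ZMod (n * p)) {k : Fin (n - 2)} (hk : (k : ℕ) ≤ n * p) :
    phi n p (i, .inr k) = ⟨i + 1, i - (k : ℕ), 1⟩ := by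
  have hcast : ((n * p + 1 - (k + 1) : ℕ) : ZMod (n * p)) = -(k : ℕ) := by
    rw [Nat.add_sub_add_right, Nat.cast_sub hk, ZMod.natCast_self, zero_sub]
  rw [phi, hcast, ← sub_eq_add_neg]

theorem phi_gammaTau_inl (i : ZMod (n * p)) (e : Bool) :
    phi n p (GammaTau (n * p) n (i, .inl e)) = tr (phi n p (i, .inl e)) := by
  rw [phi_inl, tr_radius, GammaTau]
  split_ifs with h
  · rw [phi_inl, radiusTag_not, radiusTag_sub_one, if_pos h, sub_add_eq_add_sub]
  · rw [phi_inl, radiusTag_sub_one, if_neg h, sub_add_eq_add_sub]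

theorem phi_gammaTau_inr (hp : 1 ≤ p) (i : ZMod (n * p)) (k : Fin (n - 2)) :
    phi n p (GammaTau (n * p) n (i, .inr k)) = tr (phi n p (i, .inr k)) := by
  have hk : (k : ℕ) + 1 < n * p :=
    calc (k : ℕ) + 1 < n := by omega
      _ ≤ n * p := Nat.le_mul_of_pos_right n hp
  have hends : i + 1 ≠ i - (k : ℕ) :=
    mt (add_one_eq_sub_natCast_iff i k).mp (Nat.not_dvd_of_pos_of_lt k.val.succ_pos hk)
  have hk' : (k : ℕ) ≤ n * p := by omega
  rw [GammaTau, phi_inr _ hk', phi_inr _ hk', tr_of_ne hends, sub_add_eq_add_sub, sub_right_comm]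

end Phi

/-- The map `φ_p` intertwines the translations: `φ_p ∘ τ_{n,p} = τ ∘ φ_p`. -/
theorem phi_comm_tau (n p : ℕ) (hn : 3 ≤ n) (hp : 1 ≤ p) :
    ∀ x : GammaV (n * p) n, phi n p (GammaTau (n * p) n x) = tr (phi n p x) := by
  rintro ⟨i, e | k⟩
  · exact phi_gammaTau_inl i e
  · exact phi_gammaTau_inr hp i k
end

section
/- For all vertices (i,j), (i′,j′) of Γ_{n,p}, there is an arrow (i,j) → (i′,j′) in Γ_{n,p} if and only if there is an elementary move φ_p(i,j) ↦ φ_p(i′,j′) between the corresponding tagged edges of P_{np}. -/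
/-! Give `M_{a,b}` the level `(a - b) mod N`, so that `|δ_{a,b}| = N + 1 - level`. Then `φ_p`
preserves levels and shifts the first coordinate by one. On both sides an arrow either fixes the
first coordinate and lowers the level by one, or advances the first coordinate and raises the level
by one: an elementary move between tagged edges advances exactly one endpoint, and its case
distinction on `|δ_{a,b}|` only keeps the level in range. Tags play no role, because `M_{a,a}^{+1}`
and `M_{a,a}^{-1}` have the same incoming and outgoing moves, as do the levels `0` and `0̄` in `Γ`.
-/

namespace TaggedEdge

variable {N : ℕ}

/-- The level of a tagged edge `M_{a,b}`: the distance from `b` counterclockwise to `a`, so that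
`|δ_{a,b}|` and the level add up to `N + 1`. Under `φ_p` it corresponds to the level in `Γ`. -/
def level (M : TaggedEdge N) : ℕ := (M.a - M.b).val

theorem level_eq_zero_iff {M : TaggedEdge N} : M.level = 0 ↔ M.a = M.b := by
  rw [level, ZMod.val_eq_zero, sub_eq_zero]

variable [NeZero N]

theorem level_lt (M : TaggedEdge N) : M.level < N := ZMod.val_lt _

theorem b_eq_sub_level (M : TaggedEdge N) : M.b = M.a - (M.level : ZMod N) := by
  rw [level, ZMod.natCast_zmod_val, sub_sub_cancel]

theorem deltaLen_add_level (M : TaggedEdge N) : deltaLen M.a M.b + M.level = N + 1 := by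
  by_cases h : M.a = M.b
  · rw [deltaLen, if_pos h, level_eq_zero_iff.2 h]
  · have : NeZero (M.a - M.b) := ⟨sub_ne_zero.2 h⟩
    have hlt := M.level_lt
    rw [level] at hlt ⊢
    rw [deltaLen, if_neg h, ← neg_sub M.a M.b, ZMod.val_neg_of_ne_zero]
    lia

theorem mem_Edges_iff {m : ℕ} (hmN : m ≤ N) {M : TaggedEdge N} :
    M ∈ Edges m N ↔ M.level + 2 ≤ m ∧ (M.ε = 1 ∨ M.ε = -1) ∧ (M.level ≠ 0 → M.ε = 1) := by
  have hlen : N - m + 3 ≤ deltaLen M.a M.b ↔ M.level + 2 ≤ m := by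
    have := M.deltaLen_add_level
    lia
  rw [Edges, Set.mem_ofPred_eq, hlen, ne_eq, ne_eq, level_eq_zero_iff]

theorem b_eq_iff_level_eq_add_one {M M' : TaggedEdge N} (ha : M'.a = M.a + 1)
    (hM : M.level + 1 < N) : M'.b = M.b ↔ M'.level = M.level + 1 := by
  rw [← (CharP.natCast_injOn_Iio (ZMod N) N).eq_iff M'.level_lt hM, M.b_eq_sub_level,
    M'.b_eq_sub_level, ha, Nat.cast_add_one]
  constructor <;> intro h <;> linear_combination -h

theorem b_eq_add_one_iff_level_add_one_eq {M M' : TaggedEdge N} (ha : M'.a = M.a)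
    (hM' : M'.level + 1 < N) : M'.b = M.b + 1 ↔ M'.level + 1 = M.level := by
  rw [← (CharP.natCast_injOn_Iio (ZMod N) N).eq_iff hM' M.level_lt, M.b_eq_sub_level,
    M'.b_eq_sub_level, ha, Nat.cast_add_one]
  constructor <;> intro h <;> linear_combination -h

end TaggedEdge

section ElemMove

variable {m N : ℕ} [NeZero N] {M M' : TaggedEdge N}

theorem ElemMove.advance_endpoint (h : ElemMove m N M M') :
    (M'.a = M.a + 1 ∧ M'.b = M.b) ∨ (M'.a = M.a ∧ M'.b = M.b + 1) := by
  rcases h with ⟨-, rfl⟩ | ⟨-, -, rfl | rfl⟩ | ⟨hlen, h⟩ | ⟨hab, rfl⟩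
  · exact .inr ⟨rfl, rfl⟩
  · exact .inl ⟨rfl, rfl⟩
  · exact .inr ⟨rfl, rfl⟩
  · have hlevel : M.level = 1 := by
      have := M.deltaLen_add_level
      lia
    have hba : M.a = M.b + 1 := by
      rw [M.b_eq_sub_level, hlevel, Nat.cast_one, sub_add_cancel]
    rcases h with rfl | rfl | rfl
    · exact .inl ⟨rfl, rfl⟩
    · exact .inr ⟨rfl, hba⟩
    · exact .inr ⟨rfl, hba⟩
  · exact .inl ⟨rfl, hab⟩

theorem elemMove_of_level_eq_add_one (hmN : m ≤ N) (hM' : M' ∈ Edges m N)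
    (ha : M'.a = M.a + 1) (hb : M'.b = M.b) (hlevel : M'.level = M.level + 1) :
    ElemMove m N M M' := by
  obtain ⟨hle, -, htag⟩ := (TaggedEdge.mem_Edges_iff hmN).1 hM'
  have hM'_eq : M' = ⟨M.a + 1, M.b, 1⟩ := by
    rw [← ha, ← hb, ← htag (by lia)]
  have hlen := M.deltaLen_add_level
  rcases (by lia : M.level = 0 ∨ M.level = 1 ∨ 2 ≤ M.level) with h0 | h1 | h2
  · have hab := TaggedEdge.level_eq_zero_iff.1 h0
    exact .inr (.inr (.inr ⟨hab, hab ▸ hM'_eq⟩))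
  · exact .inr (.inr (.inl ⟨by lia, .inl hM'_eq⟩))
  · exact .inr (.inl ⟨by lia, by lia, .inl hM'_eq⟩)

theorem elemMove_of_level_add_one_eq (hmN : m ≤ N) (hM : M ∈ Edges m N) (hM' : M' ∈ Edges m N)
    (ha : M'.a = M.a) (hb : M'.b = M.b + 1) (hlevel : M'.level + 1 = M.level) :
    ElemMove m N M M' := by
  obtain ⟨hle, -, -⟩ := (TaggedEdge.mem_Edges_iff hmN).1 hM
  obtain ⟨-, hsign, htag⟩ := (TaggedEdge.mem_Edges_iff hmN).1 hM'
  have hlen := M.deltaLen_add_level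
  by_cases h0 : M'.level = 0
  · have hM'_eq : M' = ⟨M.a, M.a, M'.ε⟩ := by
      rw [← ha]
      exact congrArg (TaggedEdge.mk M'.a · M'.ε) (TaggedEdge.level_eq_zero_iff.1 h0).symm
    have htags : M' = ⟨M.a, M.a, 1⟩ ∨ M' = ⟨M.a, M.a, -1⟩ :=
      hsign.imp (fun h ↦ by rw [hM'_eq, h]) (fun h ↦ by rw [hM'_eq, h])
    exact .inr (.inr (.inl ⟨by lia, .inr htags⟩))
  · have hM'_eq : M' = ⟨M.a, M.b + 1, 1⟩ := by
      rw [← ha, ← hb, ← htag h0]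
    rcases hle.eq_or_lt with hmax | hlt
    · exact .inl ⟨by lia, hM'_eq⟩
    · exact .inr (.inl ⟨by lia, by lia, .inr hM'_eq⟩)

theorem elemMove_iff_level (hmN : m ≤ N) (hM : M ∈ Edges m N) (hM' : M' ∈ Edges m N) :
    ElemMove m N M M' ↔
      (M'.a = M.a ∧ M'.level + 1 = M.level) ∨ (M'.a = M.a + 1 ∧ M'.level = M.level + 1) := by
  have hlt : M.level + 1 < N := ((TaggedEdge.mem_Edges_iff hmN).1 hM).1.trans hmN
  have hlt' : M'.level + 1 < N := ((TaggedEdge.mem_Edges_iff hmN).1 hM').1.trans hmN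
  constructor
  · intro h
    rcases h.advance_endpoint with ⟨ha, hb⟩ | ⟨ha, hb⟩
    · exact .inr ⟨ha, (TaggedEdge.b_eq_iff_level_eq_add_one ha hlt).1 hb⟩
    · exact .inl ⟨ha, (TaggedEdge.b_eq_add_one_iff_level_add_one_eq ha hlt').1 hb⟩
  · rintro (⟨ha, h⟩ | ⟨ha, h⟩)
    · have hb := (TaggedEdge.b_eq_add_one_iff_level_add_one_eq ha hlt').2 h
      exact elemMove_of_level_add_one_eq hmN hM hM' ha hb h
    · have hb := (TaggedEdge.b_eq_iff_level_eq_add_one ha hlt).2 h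
      exact elemMove_of_level_eq_add_one hmN hM' ha hb h

end ElemMove

namespace GammaV

variable {N m : ℕ}

/-- The level `j` of a vertex `(i, j)` of `Γ`, where both `0` and `0̄` count as `0`. -/
def level : GammaV N m → ℕ
  | (_, .inl _) => 0
  | (_, .inr k) => k + 1

theorem level_add_two_le (hm : 2 ≤ m) (x : GammaV N m) : x.level + 2 ≤ m := by
  rcases x with ⟨i, e | k⟩ <;> simp only [level] <;> lia

end GammaV

theorem gammaArrow_iff_level {N m : ℕ} (x y : GammaV N m) :
    GammaArrow N m x y ↔
      (y.1 = x.1 ∧ y.level + 1 = x.level) ∨ (y.1 = x.1 + 1 ∧ y.level = x.level + 1) := by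
  rcases x with ⟨i, e | k⟩ <;> rcases y with ⟨i', e' | k'⟩ <;>
    simp [GammaArrow, GammaV.level, eq_comm]

theorem phi_arrow_iff_elemMove_general {N m : ℕ} [NeZero N] (hmN : m ≤ N)
    (φ : GammaV N m → TaggedEdge N) (hφ : ∀ x, φ x ∈ Edges m N)
    (ha : ∀ x, (φ x).a = x.1 + 1) (hlevel : ∀ x, (φ x).level = x.level) (x y : GammaV N m) :
    GammaArrow N m x y ↔ ElemMove m N (φ x) (φ y) := by
  rw [gammaArrow_iff_level, elemMove_iff_level hmN (hφ x) (hφ y)]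
  simp only [ha, hlevel, add_left_inj]

section Phi

variable {n p : ℕ}

theorem phi_a (x : GammaV (n * p) n) : (phi n p x).a = x.1 + 1 := by
  rcases x with ⟨i, e | k⟩ <;> rfl

theorem phi_level (hn : 2 ≤ n) (hp : 1 ≤ p) (x : GammaV (n * p) n) :
    (phi n p x).level = x.level := by
  have hlt : x.level < n * p := by
    have := x.level_add_two_le hn
    have := Nat.le_mul_of_pos_right n hp
    lia
  have hsub : (phi n p x).a - (phi n p x).b = (x.level : ZMod (n * p)) := by
    rcases x with ⟨i, e | k⟩
    · simp [phi, GammaV.level]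
    · simp only [GammaV.level] at hlt
      simp only [phi, GammaV.level]
      rw [Nat.cast_sub (by lia), Nat.cast_add_one, ZMod.natCast_self]
      ring
  rw [TaggedEdge.level, hsub, ZMod.val_natCast_of_lt hlt]

theorem phi_mem_Edges (hn : 2 ≤ n) (hp : 1 ≤ p) (x : GammaV (n * p) n) :
    phi n p x ∈ Edges n (n * p) := by
  have : NeZero (n * p) := ⟨by positivity⟩
  rw [TaggedEdge.mem_Edges_iff (Nat.le_mul_of_pos_right n hp), phi_level hn hp]
  refine ⟨x.level_add_two_le hn, ?_⟩
  rcases x with ⟨i, e | k⟩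
  · exact ⟨ite_eq_or_eq _ _ _, fun h ↦ absurd rfl h⟩
  · exact ⟨.inl rfl, fun _ ↦ rfl⟩

end Phi

/-- There is an arrow `(i,j) → (i′,j′)` in `Γ_{n,p}` if and only if there is an
elementary move `φ_p(i,j) ↦ φ_p(i′,j′)` between the corresponding tagged edges of `P_{np}`. -/
theorem phi_arrow_iff_elemMove (n p : ℕ) (hn : 3 ≤ n) (hp : 1 ≤ p) :
    ∀ x y : GammaV (n * p) n,
      (GammaArrow (n * p) n x y ↔ ElemMove n (n * p) (phi n p x) (phi n p y)) := by
  have : NeZero (n * p) := ⟨by positivity⟩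
  exact phi_arrow_iff_elemMove_general (Nat.le_mul_of_pos_right n hp) (phi n p)
    (phi_mem_Edges (by lia) hp) phi_a (phi_level (by lia) hp)
end

section
/- The map μ_p is well defined (i.e. for every tagged edge M_{a,b}^ε of P_{np}, the triple M_{ā,b̄}^ε is a tagged edge of P_n) and is a surjection from 𝔈_{np} onto 𝔈_n in which every tagged edge of P_n has exactly p preimages. -/
/-- The map `μ_p` from tagged edges of `P_{np}` to tagged edges of `P_n`,
reducing both endpoints modulo `n` and keeping the tag. -/
def mu (n p : ℕ) (M : TaggedEdge (n * p)) : TaggedEdge n :=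
  ⟨ZMod.castHom (dvd_mul_right n p) (ZMod n) M.a,
   ZMod.castHom (dvd_mul_right n p) (ZMod n) M.b, M.ε⟩

/-!
A tagged edge is determined by its start `a`, its tag and its gap, the residue of `a - b` in
`{0, …, N - 1}`, and `|δ_{a,b}| + gap = N + 1`. Hence the condition `|δ_{a,b}| ≥ N - n + 3` reads
`gap + 2 ≤ n`, which no longer involves `N`. A gap smaller than `n` survives reduction modulo `n`,
so on edges `μ_p` fixes gap and tag and merely reduces the start along `ℤ/np → ℤ/n`, a surjective
homomorphism with kernel of order `p`.
-/

lemma ncard_fiber_mul_card_of_surjective {G H : Type*} [AddGroup G] [AddGroup H] {f : G →+ H}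
    (hf : Function.Surjective f) (y : H) : (f ⁻¹' {y}).ncard * Nat.card H = Nat.card G := by
  have hfiber : (f ⁻¹' {y}).ncard = Nat.card f.ker :=
    Nat.card_congr (f.fiberEquivKerOfSurjective hf y)
  have hindex : f.ker.index = Nat.card H := by
    rw [AddSubgroup.index_ker, AddMonoidHom.range_eq_top.mpr hf, AddSubgroup.card_top]
  rw [hfiber, ← hindex, AddSubgroup.card_mul_index]

lemma ncard_fiber_castHom_mul {n N : ℕ} (h : n ∣ N) (y : ZMod n) :
    (ZMod.castHom h (ZMod n) ⁻¹' {y}).ncard * n = N := by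
  have hcard := ncard_fiber_mul_card_of_surjective
    (f := (ZMod.castHom h (ZMod n)).toAddMonoidHom) (ZMod.castHom_surjective h) y
  rwa [Nat.card_zmod, Nat.card_zmod] at hcard

lemma deltaLen_add_val_sub {N : ℕ} [NeZero N] (a b : ZMod N) :
    deltaLen a b + (a - b).val = N + 1 := by
  unfold deltaLen
  split_ifs with hab
  · simp [hab]
  · have hval : (a - b).val = N - (b - a).val := by
      rw [← neg_sub b a, ZMod.neg_val, if_neg (sub_ne_zero.mpr (Ne.symm hab))]
    have := ZMod.val_lt (b - a)
    omega

namespace TaggedEdge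

/-- The number of counterclockwise boundary steps from the end of `M` back to its start, taken to
be `0` (and not `N`) when the two coincide. It complements `deltaLen`, which counts vertices. -/
def gap {N : ℕ} (M : TaggedEdge N) : ℕ :=
  (M.a - M.b).val

/-- The tagged edge with start `x`, gap `g` and tag `ε`. Only the residue of `g` modulo `N`
matters, so that `g` is indeed the gap only when `g < N`. -/
def ofGap {N : ℕ} (x : ZMod N) (g : ℕ) (ε : ℤ) : TaggedEdge N :=
  ⟨x, x - g, ε⟩

lemma gap_ofGap {N g : ℕ} (hg : g < N) (x : ZMod N) (ε : ℤ) : (ofGap x g ε).gap = g := by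
  simp only [gap, ofGap, sub_sub_cancel, ZMod.val_natCast_of_lt hg]

lemma ofGap_gap {N : ℕ} [NeZero N] (M : TaggedEdge N) : ofGap M.a M.gap M.ε = M := by
  simp only [gap, ofGap, ZMod.natCast_zmod_val, sub_sub_cancel]

lemma ofGap_injective {N : ℕ} (g : ℕ) (ε : ℤ) :
    Function.Injective fun x : ZMod N => ofGap x g ε :=
  fun _ _ h => congrArg a h

lemma gap_eq_zero_iff {N : ℕ} (M : TaggedEdge N) : M.gap = 0 ↔ M.a = M.b := by
  rw [gap, ZMod.val_eq_zero, sub_eq_zero]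

end TaggedEdge

section Edges

open TaggedEdge

lemma mem_Edges_iff_gap {m N : ℕ} [NeZero N] (hmN : m ≤ N) (M : TaggedEdge N) :
    M ∈ Edges m N ↔ M.gap + 2 ≤ m ∧ (M.ε = 1 ∨ M.ε = -1) ∧ (M.gap ≠ 0 → M.ε = 1) := by
  have hlen : N - m + 3 ≤ deltaLen M.a M.b ↔ M.gap + 2 ≤ m := by
    have : deltaLen M.a M.b + M.gap = N + 1 := deltaLen_add_val_sub M.a M.b
    omega
  simp only [Edges, Set.mem_ofPred_eq, hlen, Ne, gap_eq_zero_iff]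

lemma gap_lt_of_mem_Edges {m N : ℕ} [NeZero N] (hmN : m ≤ N) {M : TaggedEdge N}
    (hM : M ∈ Edges m N) : M.gap < m := by
  have := ((mem_Edges_iff_gap hmN M).mp hM).1
  omega

lemma mu_ofGap (n p : ℕ) (x : ZMod (n * p)) (g : ℕ) (ε : ℤ) :
    mu n p (ofGap x g ε) = ofGap (ZMod.castHom (dvd_mul_right n p) (ZMod n) x) g ε := by
  simp only [mu, ofGap, map_sub, map_natCast]

variable {m n p : ℕ} [NeZero n] [NeZero p]

lemma gap_mu {M : TaggedEdge (n * p)} (hM : M.gap < n) : (mu n p M).gap = M.gap := by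
  rw [← ofGap_gap M, mu_ofGap, gap_ofGap hM, ofGap_gap]

lemma gap_lt_of_mem_Edges_mul (hmn : m ≤ n) {M : TaggedEdge (n * p)}
    (hM : M ∈ Edges m (n * p)) : M.gap < n :=
  (gap_lt_of_mem_Edges (hmn.trans (Nat.le_mul_of_pos_right n (NeZero.pos p))) hM).trans_le hmn

lemma mu_mem_Edges_iff (hmn : m ≤ n) {M : TaggedEdge (n * p)} (hM : M.gap < n) :
    mu n p M ∈ Edges m n ↔ M ∈ Edges m (n * p) := by
  have hmnp : m ≤ n * p := hmn.trans (Nat.le_mul_of_pos_right n (NeZero.pos p))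
  rw [mem_Edges_iff_gap hmn, mem_Edges_iff_gap hmnp, gap_mu hM]
  rfl

lemma fiber_mu_eq_image_ofGap (hmn : m ≤ n) {M' : TaggedEdge n} (hM' : M' ∈ Edges m n) :
    {M ∈ Edges m (n * p) | mu n p M = M'} =
      (fun x => ofGap x M'.gap M'.ε) ''
        (ZMod.castHom (dvd_mul_right n p) (ZMod n) ⁻¹' {M'.a}) := by
  refine Set.Subset.antisymm ?_ ?_
  · rintro M ⟨hM, rfl⟩
    refine ⟨M.a, rfl, ?_⟩
    rw [gap_mu (gap_lt_of_mem_Edges_mul hmn hM)]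
    exact ofGap_gap M
  · rintro _ ⟨x, hx, rfl⟩
    have hmu : mu n p (ofGap x M'.gap M'.ε) = M' := by
      rw [mu_ofGap, Set.mem_singleton_iff.mp hx, ofGap_gap]
    have hgap : (ofGap x M'.gap M'.ε).gap < n := by
      have hlt : M'.gap < n := ZMod.val_lt _
      rwa [gap_ofGap (hlt.trans_le (Nat.le_mul_of_pos_right n (NeZero.pos p)))]
    exact ⟨(mu_mem_Edges_iff hmn hgap).mp (by rwa [hmu]), hmu⟩

lemma ncard_fiber_mu (hmn : m ≤ n) {M' : TaggedEdge n} (hM' : M' ∈ Edges m n) :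
    {M ∈ Edges m (n * p) | mu n p M = M'}.ncard = p := by
  rw [fiber_mu_eq_image_ofGap hmn hM', Set.ncard_image_of_injective _ (ofGap_injective _ _)]
  refine Nat.eq_of_mul_eq_mul_right (NeZero.pos n) ?_
  rw [ncard_fiber_castHom_mul, mul_comm]

theorem mu_welldefined_surjective_fibers_general (hmn : m ≤ n) :
    (∀ M ∈ Edges m (n * p), mu n p M ∈ Edges m n) ∧
    Set.SurjOn (mu n p) (Edges m (n * p)) (Edges m n) ∧
    (∀ M' ∈ Edges m n, {M ∈ Edges m (n * p) | mu n p M = M'}.ncard = p) := by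
  refine ⟨fun M hM => (mu_mem_Edges_iff hmn (gap_lt_of_mem_Edges_mul hmn hM)).mpr hM,
    fun M' hM' => ?_, fun M' hM' => ncard_fiber_mu hmn hM'⟩
  refine Set.nonempty_of_ncard_ne_zero (s := {M ∈ Edges m (n * p) | mu n p M = M'}) ?_
  rw [ncard_fiber_mu hmn hM']
  exact NeZero.ne p

end Edges

/-- The map `μ_p` is well defined (it sends tagged edges of `P_{np}` to tagged edges of
`P_n`) and is a surjection from `𝔈_{np}` onto `𝔈_n` in which every tagged edge of `P_n`
has exactly `p` preimages. -/
theorem mu_welldefined_surjective_fibers (n p : ℕ) (hn : 3 ≤ n) (hp : 1 ≤ p) :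
    (∀ M ∈ Edges n (n * p), mu n p M ∈ Edges n n) ∧
    Set.SurjOn (mu n p) (Edges n (n * p)) (Edges n n) ∧
    (∀ M' ∈ Edges n n, {M ∈ Edges n (n * p) | mu n p M = M'}.ncard = p) := by
  have : NeZero n := ⟨by omega⟩
  have : NeZero p := ⟨by omega⟩
  exact mu_welldefined_surjective_fibers_general le_rfl
end

section
/- The map μ_p sends elementary moves to elementary moves: if M and N are tagged edges of P_{np} and there is an elementary move M ↦ N (with respect to parameters n, p), then there is an elementary move μ_p(M) ↦ μ_p(N) between tagged edges of P_n (with respect to parameters n, 1). -/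
/-!
Reduction modulo a divisor `m ≥ n` of `N` shortens every boundary path that is long enough to
carry an elementary move by the same amount `N - m`. The bounds on `|δ_{a,b}|` that decide which
moves are available for `P_N` are those for `P_m` shifted by `N - m`, so each kind of move is
preserved. The map `μ_p` is the case `N = n * p`, `m = n`.
-/

section Reduction

variable {n m N : ℕ}

/-- The tagged edge of `P_m` obtained from a tagged edge of `P_N` by reducing both endpoints
modulo a divisor `m` of `N` and keeping the tag; it generalizes `mu`. -/
def TaggedEdge.reduce (h : m ∣ N) (M : TaggedEdge N) : TaggedEdge m :=
  ⟨ZMod.castHom h (ZMod m) M.a, ZMod.castHom h (ZMod m) M.b, M.ε⟩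

theorem ElemMove.sub_add_two_le_deltaLen {M M' : TaggedEdge N} (hM : ElemMove n N M M')
    (hnm : n ≤ m) (hm : 2 ≤ m) (hmN : m ≤ N) : N - m + 2 ≤ deltaLen M.a M.b := by
  rcases hM with ⟨hshort, -⟩ | ⟨hlow, -, -⟩ | ⟨hfull, -⟩ | ⟨hloop, -⟩
  · omega
  · omega
  · omega
  · rw [deltaLen, if_pos hloop]
    omega

variable [NeZero N]

theorem val_castHom (h : m ∣ N) (x : ZMod N) :
    (ZMod.castHom h (ZMod m) x).val = x.val % m := by
  rw [ZMod.castHom_apply, ZMod.cast_eq_val, ZMod.val_natCast]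

theorem val_castHom_add_sub (h : m ∣ N) {x : ZMod N} (hx : N - m ≤ x.val) :
    (ZMod.castHom h (ZMod m) x).val + (N - m) = x.val := by
  have hmN : m ≤ N := Nat.le_of_dvd (NeZero.pos N) h
  have hlt : x.val - (N - m) < m := by have := x.val_lt; omega
  obtain ⟨k, hk⟩ : m ∣ N - m := Nat.dvd_sub h dvd_rfl
  have hmod : x.val % m = x.val - (N - m) := by
    rw [← Nat.mod_eq_of_lt hlt, hk, Nat.sub_mul_mod (hk ▸ hx)]
  rw [val_castHom, hmod, Nat.sub_add_cancel hx]

theorem deltaLen_castHom_add_sub (h : m ∣ N) {a b : ZMod N} (hab : N - m + 2 ≤ deltaLen a b) :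
    deltaLen (ZMod.castHom h (ZMod m) a) (ZMod.castHom h (ZMod m) b) + (N - m) =
      deltaLen a b := by
  have hmN : m ≤ N := Nat.le_of_dvd (NeZero.pos N) h
  rcases eq_or_ne a b with rfl | hne
  · simp only [deltaLen, if_true]
    omega
  · simp only [deltaLen, if_neg hne] at hab ⊢
    have hval := val_castHom_add_sub h (x := b - a) (by omega)
    rw [map_sub] at hval
    have hne' : ZMod.castHom h (ZMod m) a ≠ ZMod.castHom h (ZMod m) b := by
      intro heq
      rw [heq, sub_self, ZMod.val_zero] at hval
      omega
    rw [if_neg hne']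
    omega

theorem mu_elemMove_general (hnm : n ≤ m) (hm : 2 ≤ m) (h : m ∣ N) {M M' : TaggedEdge N}
    (hM : ElemMove n N M M') : ElemMove n m (M.reduce h) (M'.reduce h) := by
  have hmN : m ≤ N := Nat.le_of_dvd (NeZero.pos N) h
  have hlen : deltaLen (M.reduce h).a (M.reduce h).b + (N - m) = deltaLen M.a M.b :=
    deltaLen_castHom_add_sub h (hM.sub_add_two_le_deltaLen hnm hm hmN)
  rcases hM with ⟨hshort, rfl⟩ | ⟨hlow, hup, hM'⟩ | ⟨hfull, hM'⟩ | ⟨hloop, rfl⟩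
  · exact .inl ⟨by omega, by simp only [TaggedEdge.reduce, map_add, map_one]⟩
  · refine .inr <| .inl ⟨by omega, by omega, ?_⟩
    rcases hM' with rfl | rfl <;>
      simp only [TaggedEdge.reduce, map_add, map_one, true_or, or_true]
  · refine .inr <| .inr <| .inl ⟨by omega, ?_⟩
    rcases hM' with rfl | rfl | rfl <;>
      simp only [TaggedEdge.reduce, map_add, map_one, true_or, or_true]
  · exact .inr <| .inr <| .inr ⟨congrArg _ hloop,
      by simp only [TaggedEdge.reduce, map_add, map_one]⟩

end Reduction

/-- `μ_p` sends elementary moves to elementary moves: if `M`, `N` are tagged edges of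
`P_{np}` and there is an elementary move `M ↦ N` (parameters `n`, `p`), then there is an
elementary move `μ_p(M) ↦ μ_p(N)` between tagged edges of `P_n` (parameters `n`, `1`). -/
theorem mu_elemMove (n p : ℕ) (hn : 3 ≤ n) (hp : 1 ≤ p) :
    ∀ M ∈ Edges n (n * p), ∀ N ∈ Edges n (n * p),
      ElemMove n (n * p) M N → ElemMove n n (mu n p M) (mu n p N) := by
  have : NeZero (n * p) := ⟨by positivity⟩
  intro M _ N _ hMN
  exact mu_elemMove_general le_rfl (by omega) (dvd_mul_right n p) hMN
end
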